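/- Let R be a polynomial ring over a field K, let I be an ideal generated by n ≥ 2 quadrics contained in a linear prime ideal (x, y) of height two (x, y linearly independent linear forms), and assume the local multiplicity satisfies e(R_{(x,y)}/I_{(x,y)}) ≥ 2. Then pd(R/I) ≤ n + 2. -/

import Mathlib

open MvPolynomial Filter

universe u

/-- `PdLE R n M` means the `R`-module `M` has projective dimension at most `n`:
either `M` is projective (`n = 0`), or `M` is a quotient of a free module by a
submodule of projective dimension at most `n - 1`. -/
def PdLE (R : Type u) [CommRing R] : ℕ → (M : Type u) → [AddCommGroup M] → [Module R M] → Prop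
  | 0, M, _, _ => Module.Projective R M
  | n + 1, M, _, _ => ∃ (F : Type u) (_ : AddCommGroup F) (_ : Module R F),
      Module.Free R F ∧ ∃ f : F →ₗ[R] M, Function.Surjective f ∧ PdLE R n (LinearMap.ker f)

/-- The projective dimension of an `R`-module `M`, as an element of `ℕ∞`
(`⊤` if `M` has no finite free resolution). -/
noncomputable def projDim (R : Type u) [CommRing R] (M : Type u) [AddCommGroup M]
    [Module R M] : ℕ∞ :=
  sInf ((fun n : ℕ => (n : ℕ∞)) '' {n : ℕ | PdLE R n M})

/-- The height of an ideal: the infimum of the heights of the prime ideals containing it. -/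
noncomputable def idealHeight {R : Type*} [CommRing R] (I : Ideal R) : ℕ∞ :=
  ⨅ p ∈ {p : PrimeSpectrum R | I ≤ p.asIdeal}, Order.height p

/-- The length of a module, defined as the Krull dimension of its lattice of submodules. -/
noncomputable def moduleLength (R : Type u) [CommRing R] (M : Type u) [AddCommGroup M]
    [Module R M] : WithBot ℕ∞ :=
  Order.krullDim (Submodule R M)

/-- `IsHSMultiplicity R mx I e` asserts that the Hilbert–Samuel multiplicity of `R/I`
with respect to the ideal `mx` equals `e`: for `d = dim R/I` there is a polynomial `P`
of degree `d` with `e = d! · (leading coefficient of P)` such that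
`length (R/(I + mx^n)) = P(n)` for all large `n`. -/
def IsHSMultiplicity (R : Type u) [CommRing R] (mx I : Ideal R) (e : ℕ) : Prop :=
  ∃ (d : ℕ) (P : Polynomial ℚ),
    ringKrullDim (R ⧸ I) = (d : WithBot ℕ∞) ∧
    P.natDegree = d ∧
    (e : ℚ) = P.leadingCoeff * d.factorial ∧
    ∀ᶠ n : ℕ in Filter.atTop, ∃ k : ℕ, (k : ℚ) = P.eval (n : ℚ) ∧
      moduleLength R (R ⧸ (I ⊔ mx ^ n)) = ((k : ℕ∞) : WithBot ℕ∞)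

/-- A matrix over a `K`-algebra is `1`-generic if it has no generalized zero entry:
for every nonzero vectors `u`, `v` of scalars, `uᵀ M v ≠ 0`. -/
def OneGeneric (K : Type*) [Field K] {R : Type u} [CommRing R] [Algebra K R]
    {m l : ℕ} (M : Matrix (Fin m) (Fin l) R) : Prop :=
  ∀ (u : Fin m → K) (v : Fin l → K), u ≠ 0 → v ≠ 0 →
    ∑ i, ∑ j, algebraMap K R (u i * v j) * M i j ≠ 0

/-- The ideal of all `2 × 2` minors of a `2 × l` matrix. -/
def minors2 {R : Type u} [CommRing R] {l : ℕ} (M : Matrix (Fin 2) (Fin l) R) : Ideal R :=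
  Ideal.span (Set.range fun p : Fin l × Fin l => M 0 p.1 * M 1 p.2 - M 0 p.2 * M 1 p.1)

/-- The homogeneous maximal ideal of a polynomial ring. -/
noncomputable def maxIdeal (K : Type*) [Field K] (σ : Type*) : Ideal (MvPolynomial σ K) :=
  Ideal.span (Set.range (X : σ → MvPolynomial σ K))

/-- The ideal represented by minors by the `2 × (n+1)` matrix with first column `(x, y)ᵀ`
and remaining columns `(u j, v j)ᵀ`: it is generated by the `2 × 2` minors involving
the first column. -/
def repByMinors {R : Type u} [CommRing R] {n : ℕ} (x y : R) (u v : Fin n → R) : Ideal R :=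
  Ideal.span (Set.range fun j : Fin n => x * v j - y * u j)


open CategoryTheory TensorProduct in
theorem ses_mk {R : Type u} [CommRing R] {X Y Z : Type u} [AddCommGroup X] [AddCommGroup Y]
    [AddCommGroup Z] [Module R X] [Module R Y] [Module R Z] (f : X →ₗ[R] Y) (g : Y →ₗ[R] Z)
    (hf : Function.Injective f) (hg : Function.Surjective g) (hfg : Function.Exact f g) :
    (ShortComplex.mk (ModuleCat.ofHom f) (ModuleCat.ofHom g) (by
      ext x; simp [hfg.apply_apply_eq_zero x])).ShortExact := by
  refine ShortComplex.ShortExact.mk' ?_ ?_ ?_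
  · rw [ShortComplex.ShortExact.moduleCat_exact_iff_function_exact]
    exact hfg
  · exact (ModuleCat.mono_iff_injective _).2 hf
  · exact (ModuleCat.epi_iff_surjective _).2 hg

open CategoryTheory in
theorem pd_ker {R : Type u} [CommRing R] (n : ℕ) {F M : Type u} [AddCommGroup F] [Module R F]
    [AddCommGroup M] [Module R M] [Module.Projective R F] (f : F →ₗ[R] M)
    (hf : Function.Surjective f) :
    HasProjectiveDimensionLT (ModuleCat.of R M) (n + 2) ↔
      HasProjectiveDimensionLT (ModuleCat.of R (LinearMap.ker f)) (n + 1) :=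
  (ses_mk (LinearMap.ker f).subtype f (Submodule.injective_subtype _) hf
    (LinearMap.exact_subtype_ker_map f)).hasProjectiveDimensionLT_X₃_iff n
      ((IsProjective.iff_projective (R := R) F).1 inferInstance)

open CategoryTheory in
theorem pdLE_iff {R : Type u} [CommRing R] (n : ℕ) : ∀ (M : Type u) [AddCommGroup M] [Module R M],
    PdLE R n M ↔ HasProjectiveDimensionLT (ModuleCat.of R M) (n + 1) := by
  induction n with
  | zero =>
    intro M _ _
    rw [← projective_iff_hasProjectiveDimensionLT_one, ← IsProjective.iff_projective]
    rfl
  | succ n ih =>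
    intro M _ _
    constructor
    · rintro ⟨F, _, _, hF, f, hf, h⟩
      rw [ih] at h
      exact (pd_ker n f hf).2 h
    · intro h
      have hf := Finsupp.linearCombination_id_surjective R M
      refine ⟨M →₀ R, inferInstance, inferInstance, inferInstance, _, hf, ?_⟩
      rw [ih]
      exact (pd_ker n _ hf).1 h

open CategoryTheory in
theorem PdLE.equiv {R : Type u} [CommRing R] {n : ℕ} {M M' : Type u} [AddCommGroup M] [Module R M]
    [AddCommGroup M'] [Module R M'] (e : M ≃ₗ[R] M') (h : PdLE R n M) : PdLE R n M' := by
  rw [pdLE_iff] at h ⊢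
  exact hasProjectiveDimensionLT_of_iso e.toModuleIso _

open CategoryTheory in
theorem PdLE.mono {R : Type u} [CommRing R] {n m : ℕ} (hnm : n ≤ m) {M : Type u} [AddCommGroup M]
    [Module R M] (h : PdLE R n M) : PdLE R m M := by
  rw [pdLE_iff] at h ⊢
  exact hasProjectiveDimensionLT_of_ge _ (n + 1) _ (by omega)

open TensorProduct in
theorem PdLE.baseChange {A B : Type u} [CommRing A] [CommRing B] [Algebra A B] [Module.Flat A B]
    (n : ℕ) : ∀ {M : Type u} [AddCommGroup M] [Module A M], PdLE A n M → PdLE B n (B ⊗[A] M) := by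
  induction n with
  | zero =>
    intro M _ _ h
    have : Module.Projective A M := h
    exact (inferInstance : Module.Projective B (B ⊗[A] M))
  | succ n ih =>
    rintro M _ _ ⟨F, _, _, hF, f, hf, h⟩
    refine ⟨B ⊗[A] F, inferInstance, inferInstance, inferInstance, f.baseChange B, ?_, ?_⟩
    · exact LinearMap.lTensor_surjective B hf
    · refine PdLE.equiv ?_ (ih h)
      let j : B ⊗[A] (LinearMap.ker f) →ₗ[B] B ⊗[A] F := (LinearMap.ker f).subtype.baseChange B
      have hj : Function.Injective j :=
        Module.Flat.lTensor_preserves_injective_linearMap (M := B) _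
          (Submodule.injective_subtype (LinearMap.ker f))
      have hex : Function.Exact j (f.baseChange B) :=
        lTensor_exact B (LinearMap.exact_subtype_ker_map f) hf
      exact (LinearEquiv.ofInjective j hj).trans
        (LinearEquiv.ofEq _ _ (LinearMap.exact_iff.1 hex).symm)

/-- The key step of the syzygy theorem. -/
theorem gl_step {A B : Type u} [CommRing A] [CommRing B] [Algebra A B] (t : B)
    (b : Module.Basis ℕ A B) (hb : ∀ i, b i = t ^ i) (d : ℕ)
    (hA : ∀ (M : Type u) [AddCommGroup M] [Module A M], PdLE A d M)
    (M : Type u) [AddCommGroup M] [Module B M] : PdLE B (d + 1) M := by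
  let : Module A M := Module.compHom M (algebraMap A B)
  have : IsScalarTower A B M := ⟨fun a x m => by
    rw [Algebra.smul_def, mul_smul]; rfl⟩
  have : Module.Free A B := Module.Free.of_basis b
  open TensorProduct in
  let ev : B ⊗[A] M →ₗ[B] M := LinearMap.liftBaseChange B (LinearMap.id : M →ₗ[A] M)
  let mt : M →ₗ[A] M := (LinearMap.lsmul B M t).restrictScalars A
  let φ : TensorProduct A B M →ₗ[B] TensorProduct A B M :=
    t • LinearMap.id - mt.baseChange B
  have hφ : ∀ (c : B) (m : M), φ (c ⊗ₜ m) = (t * c) ⊗ₜ m - c ⊗ₜ (t • m) := by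
    intro c m
    simp [φ, mt, TensorProduct.smul_tmul']
  let E := TensorProduct.equivFinsuppOfBasisLeft (N := M) b
  have hE : ∀ (i : ℕ) (m : M), E ((t ^ i) ⊗ₜ m) = Finsupp.single i m := by
    intro i m
    ext k
    rw [TensorProduct.equivFinsuppOfBasisLeft_apply_tmul_apply, ← hb]
    simp [Finsupp.single_apply]
  have hE' : ∀ i m, E.symm (Finsupp.single i m) = (t ^ i) ⊗ₜ m := by
    intro i m; rw [← hE]; simp
  have hind : ∀ (p : TensorProduct A B M → Prop), (∀ i m, p ((t ^ i) ⊗ₜ m)) →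
      (∀ z w, p z → p w → p (z + w)) → ∀ z, p z := by
    intro p h1 h2 z
    have : ∀ f : ℕ →₀ M, p (E.symm f) := by
      intro f
      induction f using Finsupp.induction_linear with
      | zero => simpa using h1 0 0
      | add f g hf hg => rw [map_add]; exact h2 _ _ hf hg
      | single i m => rw [hE']; exact h1 i m
    simpa using this (E z)
  have hinj : Function.Injective φ := by
    rw [injective_iff_map_eq_zero]
    intro z hz
    have hc : ∀ k, ∀ z, E (φ z) (k + 1) = E z k - t • E z (k + 1) := by
      intro k
      apply hind
      · intro i m
        rw [hφ, map_sub, ← pow_succ', hE, hE, hE]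
        by_cases h1 : i = k <;> by_cases h2 : i = k + 1 <;> simp [h1, h2]
      · intro z w h1 h2
        simp only [map_add, Finsupp.add_apply, h1, h2, smul_add]
        abel
    have hk : ∀ k, E z k = t • E z (k + 1) := by
      intro k
      have := hc k z
      rw [hz] at this
      exact sub_eq_zero.1 (by simpa using this.symm)
    have hkj : ∀ j k, E z k = t ^ j • E z (k + j) := by
      intro j
      induction j with
      | zero => simp
      | succ j ih => intro k; rw [ih k, hk (k + j), ← mul_smul, ← pow_succ]; rfl
    have : E z = 0 := by
      ext k
      obtain ⟨j, hj⟩ : ∃ j, ∀ i ∈ (E z).support, i < j :=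
        ⟨(E z).support.sup id + 1, fun i hi => Nat.lt_succ_of_le (Finset.le_sup (f := id) hi)⟩
      rw [hkj j k]
      have : E z (k + j) = 0 := by
        by_contra h
        have := hj _ (Finsupp.mem_support_iff.2 h)
        omega
      simp [this]
    simpa using this
  have hsurj : Function.Surjective ev := fun m => ⟨1 ⊗ₜ m, by simp [ev]⟩
  have hex : Function.Exact φ ev := by
    have h0 : ∀ z, ev (φ z) = 0 := by
      apply hind
      · intro i m; rw [hφ]; simp [ev, mul_smul, smul_comm t (t ^ i) m]
      · intro z w h1 h2; simp [h1, h2]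
    have h1 : ∀ z, ∃ w, z = φ w + 1 ⊗ₜ (ev z) := by
      apply hind
      · intro i
        induction i with
        | zero => intro m; exact ⟨0, by simp [ev]⟩
        | succ i ih =>
          intro m
          obtain ⟨w, hw⟩ := ih (t • m)
          refine ⟨w + (t ^ i) ⊗ₜ m, ?_⟩
          rw [map_add, hφ, ← pow_succ', add_right_comm]
          have : ev ((t ^ (i + 1)) ⊗ₜ m) = ev ((t ^ i) ⊗ₜ (t • m)) := by
            simp [ev, pow_succ, mul_smul]
          rw [this, ← hw]
          abel
      · rintro z w ⟨z', hz⟩ ⟨w', hw⟩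
        refine ⟨z' + w', ?_⟩
        rw [map_add, map_add, TensorProduct.tmul_add]
        conv_lhs => rw [hz, hw]
        abel
    intro z
    constructor
    · intro hz
      obtain ⟨w, hw⟩ := h1 z
      rw [hz] at hw
      exact ⟨w, by rw [hw]; simp⟩
    · rintro ⟨w, rfl⟩; exact h0 w
  have hT : PdLE B d (TensorProduct A B M) := PdLE.baseChange d (hA M)
  have hT' := PdLE.mono (Nat.le_succ d) hT
  rw [pdLE_iff] at hT hT' ⊢
  exact (ses_mk φ ev hinj hsurj hex).hasProjectiveDimensionLT_X₃ (d + 1) hT hT'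

theorem syzygy (K : Type u) [Field K] (d : ℕ) :
    ∀ (M : Type u) [AddCommGroup M] [Module (MvPolynomial (Fin d) K) M],
      PdLE (MvPolynomial (Fin d) K) d M := by
  induction d with
  | zero =>
    intro M _ _
    let e : MvPolynomial (Fin 0) K ≃+* K := (MvPolynomial.isEmptyAlgEquiv K (Fin 0)).toRingEquiv
    have : IsSemisimpleRing (MvPolynomial (Fin 0) K) := e.symm.isSemisimpleRing
    exact Module.projective_of_isSemisimpleRing (MvPolynomial (Fin 0) K) M
  | succ d ih =>
    intro M _ _
    let e := MvPolynomial.finSuccEquiv K d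
    let : Algebra (MvPolynomial (Fin d) K) (MvPolynomial (Fin (d + 1)) K) :=
      (e.symm.toRingEquiv.toRingHom.comp Polynomial.C).toAlgebra
    let eL : Polynomial (MvPolynomial (Fin d) K) ≃ₗ[MvPolynomial (Fin d) K]
        MvPolynomial (Fin (d + 1)) K :=
      { e.symm.toRingEquiv.toAddEquiv with
        map_smul' := fun a p => by
          change e.symm (a • p) = e.symm (Polynomial.C a) * e.symm p
          rw [← map_mul, Polynomial.smul_eq_C_mul] }
    refine gl_step (e.symm Polynomial.X) ((Polynomial.basisMonomials _).map eL) ?_ d ih M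
    intro i
    rw [Module.Basis.map_apply, Polynomial.coe_basisMonomials, ← map_pow,
      ← Polynomial.monomial_one_right_eq_X_pow]
    rfl

theorem sumExtend_inl' {ι K V : Type*} [Field K] [AddCommGroup V] [Module K V] {v : ι → V}
    (hs : LinearIndependent K v) (i : ι) : Module.Basis.sumExtend hs (Sum.inl i) = v i := by
  simp [Module.Basis.sumExtend]
  rfl

theorem coords {K : Type u} [Field K] {N : ℕ} {ι : Type} (v : ι → MvPolynomial (Fin N) K)
    (hv : LinearIndependent K v) (hom : ∀ i, (v i).IsHomogeneous 1) :
    ∃ (κ : Type u) (ψ : MvPolynomial (Fin N) K ≃ₐ[K] MvPolynomial (ι ⊕ κ) K),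
      (∀ i, ψ (v i) = X (Sum.inl i)) ∧ ∀ p, p.IsHomogeneous 1 → (ψ p).IsHomogeneous 1 := by
  let β : Module.Basis (Fin N) K (Fin N →₀ K) := Finsupp.basisSingleOne
  let eS := SymmetricAlgebra.equivMvPolynomial β
  let lin : (Fin N →₀ K) →ₗ[K] MvPolynomial (Fin N) K :=
    eS.toLinearMap ∘ₗ SymmetricAlgebra.ι K (Fin N →₀ K)
  have hlinX : ∀ i, lin (β i) = X i := fun i => SymmetricAlgebra.equivMvPolynomial_ι_apply β i
  have hlin : ∀ p : MvPolynomial (Fin N) K, p.IsHomogeneous 1 → ∃ e, lin e = p := by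
    intro p hp
    have : p ∈ Submodule.span K (Set.range (X : Fin N → MvPolynomial (Fin N) K)) := by
      rw [← homogeneousSubmodule_one_eq_span_X]; exact hp
    have h2 : Submodule.span K (Set.range (X : Fin N → MvPolynomial (Fin N) K))
        ≤ LinearMap.range lin := by
      rw [Submodule.span_le]
      rintro _ ⟨i, rfl⟩
      exact ⟨β i, hlinX i⟩
    exact h2 this
  choose c hc using fun i => hlin (v i) (hom i)
  have hci : LinearIndependent K c := by
    refine LinearIndependent.of_comp lin ?_
    convert hv using 1
    ext1 i
    exact hc i
  let b := Module.Basis.sumExtend hci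
  let ψ := eS.symm.trans (SymmetricAlgebra.equivMvPolynomial b)
  have hψ : ∀ e, ψ (lin e) = SymmetricAlgebra.equivMvPolynomial b (SymmetricAlgebra.ι K _ e) := by
    intro e; simp [ψ, lin]
  refine ⟨_, ψ, ?_, ?_⟩
  · intro i
    rw [← hc i, hψ, ← sumExtend_inl' hci]
    exact SymmetricAlgebra.equivMvPolynomial_ι_apply b _
  · intro p hp
    obtain ⟨e, rfl⟩ := hlin p hp
    rw [hψ]
    have he : Submodule.span K (Set.range b) ≤ (homogeneousSubmodule _ K 1).comap
        ((SymmetricAlgebra.equivMvPolynomial b).toLinearMap ∘ₗ SymmetricAlgebra.ι K _) := by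
      rw [Submodule.span_le]
      rintro _ ⟨i, rfl⟩
      change (SymmetricAlgebra.equivMvPolynomial b (SymmetricAlgebra.ι K _ (b i))).IsHomogeneous 1
      rw [SymmetricAlgebra.equivMvPolynomial_ι_apply]
      exact isHomogeneous_X _ _
    rw [b.span_eq] at he
    exact he (Submodule.mem_top (x := e))

theorem pd_of_adjoin {K : Type u} [Field K] {N m n : ℕ} (w : Fin m → MvPolynomial (Fin N) K)
    (hw : ∀ i, (w i).IsHomogeneous 1) (g : Fin n → MvPolynomial (Fin N) K)
    (hg : ∀ j, g j ∈ Algebra.adjoin K (Set.range w)) :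
    PdLE (MvPolynomial (Fin N) K) m (MvPolynomial (Fin N) K ⧸ Ideal.span (Set.range g)) := by
  let S := Submodule.span K (Set.range w)
  have : FiniteDimensional K S := FiniteDimensional.span_of_finite K (Set.finite_range w)
  have hr : Module.finrank K S ≤ m := by
    have := finrank_range_le_card (R := K) w
    rwa [Fintype.card_fin] at this
  obtain ⟨r, hrr⟩ : ∃ r, r = Module.finrank K S := ⟨_, rfl⟩
  let bs : Module.Basis (Fin r) K S := (Module.finBasis K S).reindex (finCongr hrr.symm)
  let v : Fin r → MvPolynomial (Fin N) K := fun i => (bs i : MvPolynomial (Fin N) K)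
  have hv : LinearIndependent K v := bs.linearIndependent.map' S.subtype (by simp)
  have hSle : S ≤ homogeneousSubmodule (Fin N) K 1 := by
    rw [Submodule.span_le]; rintro _ ⟨i, rfl⟩; exact hw i
  obtain ⟨κ, ψ, hψ, -⟩ := coords v hv (fun i => hSle (bs i).2)
  let Ψ : MvPolynomial (Fin N) K ≃ₐ[K] MvPolynomial κ (MvPolynomial (Fin r) K) :=
    (ψ.trans (renameEquiv K (Equiv.sumComm (Fin r) κ))).trans (sumAlgEquiv K κ (Fin r))
  have hΨ : ∀ i, Ψ (v i) = C (X i) := by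
    intro i
    simp [Ψ, hψ]
  let alg : Algebra (MvPolynomial (Fin r) K) (MvPolynomial (Fin N) K) :=
    (aeval v).toRingHom.toAlgebra
  have halg : ∀ a, algebraMap (MvPolynomial (Fin r) K) (MvPolynomial (Fin N) K) a = aeval v a :=
    fun a => rfl
  have hΨa : ∀ a : MvPolynomial (Fin r) K, Ψ (aeval v a) = C a := by
    intro a
    have : (Ψ.toAlgHom.comp (aeval v)) =
        (Algebra.ofId (MvPolynomial (Fin r) K)
          (MvPolynomial κ (MvPolynomial (Fin r) K))).restrictScalars K := by
      ext1 i
      simp only [AlgHom.comp_apply, aeval_X]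
      exact hΨ i
    exact DFunLike.congr_fun this a
  let eL : MvPolynomial κ (MvPolynomial (Fin r) K) ≃ₗ[MvPolynomial (Fin r) K]
        MvPolynomial (Fin N) K :=
      { Ψ.symm.toRingEquiv.toAddEquiv with
        map_smul' := fun a p => by
          change Ψ.symm (a • p) = (aeval v a) * Ψ.symm p
          rw [← Ψ.symm_apply_apply (aeval v a), hΨa, ← map_mul, smul_eq_C_mul] }
  have : Module.Free (MvPolynomial (Fin r) K) (MvPolynomial (Fin N) K) := Module.Free.of_equiv eL
  have hsub : ∀ j, ∃ h : MvPolynomial (Fin r) K, aeval v h = g j := by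
    intro j
    have h1 : Algebra.adjoin K (Set.range w) ≤ (aeval v : MvPolynomial (Fin r) K →ₐ[K] _).range := by
      rw [Algebra.adjoin_le_iff]
      rintro _ ⟨i, rfl⟩
      have hwi : w i ∈ S := Submodule.subset_span ⟨i, rfl⟩
      refine ⟨∑ k, C (bs.repr ⟨w i, hwi⟩ k) * X k, ?_⟩
      have := congrArg Subtype.val (bs.sum_repr ⟨w i, hwi⟩)
      rw [AddSubmonoidClass.coe_finsetSum] at this
      refine Eq.trans ?_ this
      simp [v, Algebra.smul_def]
    exact h1 (hg j)
  choose h hh using hsub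
  have hmap : (Ideal.span (Set.range h)).map
      (algebraMap (MvPolynomial (Fin r) K) (MvPolynomial (Fin N) K)) = Ideal.span (Set.range g) := by
    rw [Ideal.map_span, ← Set.range_comp]
    congr 2
    ext1 j
    exact hh j
  rw [← hmap]
  exact PdLE.mono (by omega) (PdLE.equiv (Ideal.qoutMapEquivTensorQout _).symm
    (PdLE.baseChange r (syzygy K r (MvPolynomial (Fin r) K ⧸ Ideal.span (Set.range h)))))

theorem decomp_mul {σ K : Type*} [Field K] (a x : MvPolynomial σ K) (hx : x.IsHomogeneous 1) :
    homogeneousComponent 2 (a * x) = homogeneousComponent 1 a * x := by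
  have ha := sum_homogeneousComponent a
  set s := a.totalDegree + 2 with hs
  have h1 : a = ∑ i ∈ Finset.range s, homogeneousComponent i a := by
    rw [hs, Finset.sum_range_succ, homogeneousComponent_eq_zero (a.totalDegree + 1) a (by omega),
      add_zero]
    exact ha.symm
  conv_lhs => rw [h1]
  rw [Finset.sum_mul, map_sum, Finset.sum_eq_single 1]
  · exact (homogeneousComponent_of_mem (m := 2)
      ((homogeneousComponent_isHomogeneous 1 a).mul hx)).trans (if_pos rfl)
  · intro i _ hi
    rw [homogeneousComponent_of_mem ((homogeneousComponent_isHomogeneous i a).mul hx), if_neg]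
    omega
  · intro h
    simp [hs] at h

theorem decomp_quadric {σ K : Type*} [Field K] (x y q : MvPolynomial σ K) (hx : x.IsHomogeneous 1)
    (hy : y.IsHomogeneous 1) (hq : q.IsHomogeneous 2) (h : q ∈ Ideal.span {x, y}) :
    ∃ a b : MvPolynomial σ K, a.IsHomogeneous 1 ∧ b.IsHomogeneous 1 ∧ q = a * x + b * y := by
  obtain ⟨a, b, h⟩ := Ideal.mem_span_pair.1 h
  refine ⟨homogeneousComponent 1 a, homogeneousComponent 1 b,
    homogeneousComponent_isHomogeneous _ _, homogeneousComponent_isHomogeneous _ _, ?_⟩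
  rw [← decomp_mul a x hx, ← decomp_mul b y hy, ← map_add, h,
    homogeneousComponent_of_mem hq, if_pos rfl]

theorem linear_prime {σ K : Type*} [Field K] (a : MvPolynomial σ K) (ha : a.IsHomogeneous 1)
    (h0 : a ≠ 0) : Prime a := by
  have htd : a.totalDegree = 1 := ha.totalDegree h0
  refine (irreducible_of_totalDegree_eq_one htd ?_).prime
  intro c hc
  obtain ⟨d, hd⟩ := ne_zero_iff.1 h0
  have := hc d
  exact isUnit_iff_ne_zero.2 (fun h => hd (by simpa [h] using this))

theorem linear_dvd {σ K : Type*} [Field K] (a b : MvPolynomial σ K) (ha : a.IsHomogeneous 1)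
    (hb : b.IsHomogeneous 1) (h0 : a ≠ 0) (h : a ∣ b) : ∃ c : K, b = C c * a := by
  obtain ⟨r, rfl⟩ := h
  by_cases hr : r = 0
  · exact ⟨0, by simp [hr]⟩
  have h1 := hb.totalDegree (mul_ne_zero h0 hr)
  rw [totalDegree_mul_of_isDomain h0 hr, ha.totalDegree h0] at h1
  have h2 := totalDegree_eq_zero_iff_eq_C.1 (show r.totalDegree = 0 by omega)
  exact ⟨_, by rw [mul_comm]; congr 1⟩

theorem rank_one {σ K : Type*} [Field K] {n : ℕ} (a b : Fin n → MvPolynomial σ K)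
    (ha : ∀ i, (a i).IsHomogeneous 1) (hb : ∀ i, (b i).IsHomogeneous 1)
    (h : ∀ i j, a i * b j = a j * b i) :
    (∀ i, a i = 0) ∨ (∃ c : K, ∀ i, b i = C c * a i) ∨
      ∃ k, ∀ i, ∃ c : K, a i = C c * a k ∧ b i = C c * b k := by
  by_cases h0 : ∀ i, a i = 0
  · exact Or.inl h0
  push Not at h0
  obtain ⟨k, hk⟩ := h0
  right
  by_cases hd : a k ∣ b k
  · left
    obtain ⟨c, hc⟩ := linear_dvd _ _ (ha k) (hb k) hk hd
    refine ⟨c, fun i => mul_left_cancel₀ hk ?_⟩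
    rw [h k i, hc]; ring
  · right
    refine ⟨k, fun i => ?_⟩
    have h1 : a k ∣ a i * b k := ⟨b i, (h k i).symm⟩
    rcases (linear_prime _ (ha k) hk).dvd_or_dvd h1 with h1 | h1
    · obtain ⟨c, hc⟩ := linear_dvd _ _ (ha k) (ha i) hk h1
      refine ⟨c, hc, mul_left_cancel₀ hk ?_⟩
      rw [h k i, hc]; ring
    · exact absurd h1 hd

theorem proj_exists {K : Type u} [Field K] {N : ℕ} (x y : MvPolynomial (Fin N) K)
    (hx : x.IsHomogeneous 1) (hy : y.IsHomogeneous 1) (hxy : LinearIndependent K ![x, y]) :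
    ∃ (κ : Type u) (π : MvPolynomial (Fin N) K →ₐ[K] MvPolynomial κ K),
      π x = 0 ∧ π y = 0 ∧ (∀ p, p.IsHomogeneous 1 → (π p).IsHomogeneous 1) ∧
      ∀ p, p.IsHomogeneous 1 → π p = 0 → ∃ c d : K, p = C c * x + C d * y := by
  obtain ⟨κ, ψ, hψ, hom⟩ := coords ![x, y] hxy (by
    intro i; fin_cases i
    · exact hx
    · exact hy)
  have hψx : ψ x = X (Sum.inl 0) := hψ 0
  have hψy : ψ y = X (Sum.inl 1) := hψ 1
  let ρ : MvPolynomial (Fin 2 ⊕ κ) K →ₐ[K] MvPolynomial κ K :=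
    aeval (Sum.elim (fun _ => 0) X)
  let θ : MvPolynomial κ K →ₐ[K] MvPolynomial (Fin 2 ⊕ κ) K := rename Sum.inr
  have key : ∀ p : MvPolynomial (Fin 2 ⊕ κ) K, p.IsHomogeneous 1 → (ρ p).IsHomogeneous 1 ∧
      ∃ c d : K, p = C c * X (Sum.inl 0) + C d * X (Sum.inl 1) + θ (ρ p) := by
    intro p hp
    have hp' : p ∈ Submodule.span K (Set.range (X : _ → MvPolynomial (Fin 2 ⊕ κ) K)) := by
      rw [← homogeneousSubmodule_one_eq_span_X]; exact hp
    clear hp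
    induction hp' using Submodule.span_induction with
    | mem p h =>
      obtain ⟨i, rfl⟩ := h
      rcases i with i | i
      · constructor
        · simpa [ρ] using isHomogeneous_zero _ _ _
        · fin_cases i
          · exact ⟨1, 0, by simp [ρ]⟩
          · exact ⟨0, 1, by simp [ρ]⟩
      · exact ⟨by simpa [ρ] using isHomogeneous_X _ _, 0, 0, by simp [ρ, θ]⟩
    | zero => exact ⟨by simpa using isHomogeneous_zero _ _ _, 0, 0, by simp⟩
    | add p q _ _ h1 h2 =>
      obtain ⟨h1, c, d, e⟩ := h1
      obtain ⟨h2, c', d', e'⟩ := h2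
      refine ⟨by rw [map_add]; exact h1.add h2, c + c', d + d', ?_⟩
      conv_lhs => rw [e, e']
      simp only [map_add]; ring
    | smul a p _ h1 =>
      obtain ⟨h1, c, d, e⟩ := h1
      refine ⟨by rw [map_smul]; exact (homogeneousSubmodule _ K 1).smul_mem a h1, a * c, a * d, ?_⟩
      conv_lhs => rw [e]
      rw [map_smul, map_smul, smul_eq_C_mul, smul_eq_C_mul, map_mul, map_mul]; ring
  refine ⟨κ, ρ.comp ψ.toAlgHom, ?_, ?_, ?_, ?_⟩
  · change ρ (ψ x) = 0
    rw [hψx]; simp [ρ]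
  · change ρ (ψ y) = 0
    rw [hψy]; simp [ρ]
  · intro p hp; exact (key _ (hom p hp)).1
  · intro p hp h0
    obtain ⟨-, c, d, e⟩ := key _ (hom p hp)
    replace h0 : ρ (ψ p) = 0 := h0
    rw [h0, map_zero, add_zero] at e
    refine ⟨c, d, ψ.injective ?_⟩
    rw [e, map_add, map_mul, map_mul, hψx, hψy]
    simp only [← algebraMap_eq, AlgEquiv.commutes]

/-- Multiplicity at least two forces all the minors to vanish modulo `(x, y)`. -/
theorem minor_mem {R : Type u} [CommRing R] {n : ℕ} (x y : R) (P : Ideal R) [P.IsPrime]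
    (hP : P = Ideal.span {x, y}) (I : Ideal R) (a b : Fin n → R)
    (hI : I = Ideal.span (Set.range fun i => a i * x + b i * y))
    (hmult : ∃ e : ℕ, 2 ≤ e ∧ IsHSMultiplicity (Localization.AtPrime P)
      (IsLocalRing.maximalIdeal (Localization.AtPrime P))
      (I.map (algebraMap R (Localization.AtPrime P))) e) (i j : Fin n) :
    a i * b j - a j * b i ∈ P := by
  by_contra hD
  set L := Localization.AtPrime P
  set f := algebraMap R L
  have hu : IsUnit (f (a i * b j - a j * b i)) := IsLocalization.map_units L (⟨_, hD⟩ : P.primeCompl)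
  have hgI : ∀ k, a k * x + b k * y ∈ I := fun k => by
    rw [hI]; exact Ideal.subset_span ⟨k, rfl⟩
  have hxI : (a i * b j - a j * b i) * x ∈ I := by
    have := I.sub_mem (I.mul_mem_left (b j) (hgI i)) (I.mul_mem_left (b i) (hgI j))
    convert this using 1; ring
  have hyI : (a i * b j - a j * b i) * y ∈ I := by
    have := I.sub_mem (I.mul_mem_left (a i) (hgI j)) (I.mul_mem_left (a j) (hgI i))
    convert this using 1; ring
  have hIP : I ≤ P := by
    rw [hI, Ideal.span_le]
    rintro _ ⟨k, rfl⟩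
    exact P.add_mem (P.mul_mem_left _ (hP ▸ Ideal.subset_span (by simp)))
      (P.mul_mem_left _ (hP ▸ Ideal.subset_span (by simp)))
  have hmx : IsLocalRing.maximalIdeal L = P.map f := (Localization.AtPrime.map_eq_maximalIdeal).symm
  have hIm : I.map f = IsLocalRing.maximalIdeal L := by
    rw [hmx]
    refine le_antisymm (Ideal.map_mono hIP) ?_
    refine (Ideal.map_mono hP.le).trans ?_
    rw [Ideal.map_span, Ideal.span_le]
    rintro _ ⟨z, hz, rfl⟩
    have h1 : (a i * b j - a j * b i) * z ∈ I := by
      rcases hz with rfl | rfl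
      · exact hxI
      · exact hyI
    have h2 := Ideal.mem_map_of_mem f h1
    rw [map_mul] at h2
    exact (Ideal.unit_mul_mem_iff_mem _ hu).1 h2
  obtain ⟨e, he, d, Q, hd, hQ, heQ, hev⟩ := hmult
  rw [hIm] at hd hev
  have hfield : IsField (L ⧸ IsLocalRing.maximalIdeal L) :=
    (Ideal.Quotient.maximal_ideal_iff_isField_quotient _).1 inferInstance
  have hd0 : d = 0 := by
    have := ringKrullDim_eq_zero_of_isField hfield
    rw [this] at hd
    exact_mod_cast hd.symm
  subst hd0
  obtain ⟨m, hm1, k, hk, hlen⟩ := ((eventually_ge_atTop 1).and hev).exists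
  have hsup : IsLocalRing.maximalIdeal L ⊔ IsLocalRing.maximalIdeal L ^ m
      = IsLocalRing.maximalIdeal L := sup_eq_left.2 (Ideal.pow_le_self (by omega))
  rw [hsup] at hlen
  have hsimple : IsSimpleModule L (L ⧸ IsLocalRing.maximalIdeal L) :=
    isSimpleModule_iff_isCoatom.2 (IsLocalRing.maximalIdeal.isMaximal L).out
  have hlen1 : moduleLength L (L ⧸ IsLocalRing.maximalIdeal L) = 1 := by
    have := Module.length_eq_one L (L ⧸ IsLocalRing.maximalIdeal L)
    rw [moduleLength, ← Module.coe_length, this]; rfl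
  rw [hlen1] at hlen
  have hk1 : k = 1 := by exact_mod_cast hlen.symm
  rw [Polynomial.eq_C_of_natDegree_eq_zero hQ] at hk heQ
  simp only [Polynomial.eval_C, Polynomial.leadingCoeff_C, Nat.factorial_zero, Nat.cast_one,
    mul_one] at hk heQ
  rw [← heQ, hk1] at hk
  have : (1 : ℕ) = e := by exact_mod_cast hk
  omega

theorem isHomogeneous_C_mul' {σ K : Type*} [Field K] (c : K) (p : MvPolynomial σ K)
    (hp : p.IsHomogeneous 1) : (C c * p).IsHomogeneous 1 := by
  rw [← smul_eq_C_mul]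
  exact (homogeneousSubmodule σ K 1).smul_mem c hp

/-- if `I` is generated by `n ≥ 2` quadrics, contained in a height two
linear prime `(x, y)`, and the local multiplicity `e(R_(x,y)/I_(x,y)) ≥ 2`, then
`pd(R/I) ≤ n + 2`. -/
theorem stmt15 (K : Type u) [Field K] (N n : ℕ) (hn : 2 ≤ n)
    (x y : MvPolynomial (Fin N) K) (hx : x.IsHomogeneous 1) (hy : y.IsHomogeneous 1)
    (hxy : LinearIndependent K ![x, y])
    [hprime : (Ideal.span ({x, y} : Set (MvPolynomial (Fin N) K))).IsPrime]
    (hht : idealHeight (Ideal.span ({x, y} : Set (MvPolynomial (Fin N) K))) = 2)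
    (I : Ideal (MvPolynomial (Fin N) K)) (g : Fin n → MvPolynomial (Fin N) K)
    (hg : ∀ i, (g i).IsHomogeneous 2)
    (hI : I = Ideal.span (Set.range g))
    (hle : I ≤ Ideal.span {x, y})
    (hmult : ∃ e : ℕ, 2 ≤ e ∧
      IsHSMultiplicity (Localization.AtPrime (Ideal.span ({x, y} : Set (MvPolynomial (Fin N) K))))
        (IsLocalRing.maximalIdeal (Localization.AtPrime (Ideal.span ({x, y} : Set (MvPolynomial (Fin N) K)))))
        (I.map (algebraMap (MvPolynomial (Fin N) K) (Localization.AtPrime (Ideal.span ({x, y} : Set (MvPolynomial (Fin N) K)))))) e) :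
    projDim (MvPolynomial (Fin N) K) (MvPolynomial (Fin N) K ⧸ I) ≤ ((n + 2 : ℕ) : ℕ∞) := by
  have hgm : ∀ i, g i ∈ Ideal.span ({x, y} : Set (MvPolynomial (Fin N) K)) := fun i =>
    hle (by rw [hI]; exact Ideal.subset_span ⟨i, rfl⟩)
  choose a b ha hb hab using fun i => decomp_quadric x y (g i) hx hy (hg i) (hgm i)
  have hI' : I = Ideal.span (Set.range fun i => a i * x + b i * y) := by
    rw [hI]; congr 2; ext1 i; exact hab i
  have hmin := minor_mem x y _ rfl I a b hI' hmult
  suffices h : PdLE (MvPolynomial (Fin N) K) (n + 2) (MvPolynomial (Fin N) K ⧸ I) from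
    sInf_le ⟨n + 2, h, rfl⟩
  obtain ⟨κ, π, hπx, hπy, hπ, hker⟩ := proj_exists x y hx hy hxy
  have hπmin : ∀ i j, π (a i) * π (b j) = π (a j) * π (b i) := by
    intro i j
    obtain ⟨c, d, h⟩ := Ideal.mem_span_pair.1 (hmin i j)
    have := congrArg π h
    simp only [map_add, map_mul, map_sub, hπx, hπy, mul_zero, add_zero] at this
    exact (sub_eq_zero.1 this.symm)
  have hC : ∀ (S : Subalgebra K (MvPolynomial (Fin N) K)) (c : K), C c ∈ S :=
    fun S c => S.algebraMap_mem c
  rw [hI]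
  rcases rank_one (fun i => π (a i)) (fun i => π (b i)) (fun i => hπ _ (ha i))
    (fun i => hπ _ (hb i)) hπmin with h | ⟨c, h⟩ | ⟨k, h⟩
  · let w : Fin (n + 2) → MvPolynomial (Fin N) K := Fin.cons x (Fin.cons y b)
    have hwx : x ∈ Algebra.adjoin K (Set.range w) := Algebra.subset_adjoin ⟨0, rfl⟩
    have hwy : y ∈ Algebra.adjoin K (Set.range w) := Algebra.subset_adjoin ⟨1, rfl⟩
    have hwb : ∀ i, b i ∈ Algebra.adjoin K (Set.range w) :=
      fun i => Algebra.subset_adjoin ⟨i.succ.succ, rfl⟩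
    refine pd_of_adjoin w ?_ g ?_
    · refine Fin.cases hx (Fin.cases hy hb)
    · intro j
      obtain ⟨c, d, e⟩ := hker _ (ha j) (h j)
      rw [hab j, e]
      exact add_mem (mul_mem (add_mem (mul_mem (hC _ _) hwx) (mul_mem (hC _ _) hwy)) hwx)
        (mul_mem (hwb j) hwy)
  · let w : Fin (n + 2) → MvPolynomial (Fin N) K := Fin.cons x (Fin.cons y a)
    have hwx : x ∈ Algebra.adjoin K (Set.range w) := Algebra.subset_adjoin ⟨0, rfl⟩
    have hwy : y ∈ Algebra.adjoin K (Set.range w) := Algebra.subset_adjoin ⟨1, rfl⟩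
    have hwa : ∀ i, a i ∈ Algebra.adjoin K (Set.range w) :=
      fun i => Algebra.subset_adjoin ⟨i.succ.succ, rfl⟩
    refine pd_of_adjoin w ?_ g ?_
    · refine Fin.cases hx (Fin.cases hy ha)
    · intro j
      obtain ⟨d, e, hde⟩ := hker (b j - C c * a j)
        ((hb j).sub ((isHomogeneous_C_mul' c _ (ha j)))) (by
          have hj : π (b j) = C c * π (a j) := h j
          rw [map_sub, map_mul, hj, ← algebraMap_eq, ← algebraMap_eq, AlgHom.commutes, sub_self])
      rw [hab j, sub_eq_iff_eq_add.1 hde]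
      exact add_mem (mul_mem (hwa j) hwx)
        (mul_mem (add_mem (add_mem (mul_mem (hC _ _) hwx) (mul_mem (hC _ _) hwy))
          (mul_mem (hC _ _) (hwa j))) hwy)
  · let w : Fin 4 → MvPolynomial (Fin N) K := ![x, y, a k, b k]
    have hwx : x ∈ Algebra.adjoin K (Set.range w) := Algebra.subset_adjoin ⟨0, rfl⟩
    have hwy : y ∈ Algebra.adjoin K (Set.range w) := Algebra.subset_adjoin ⟨1, rfl⟩
    have hwa : a k ∈ Algebra.adjoin K (Set.range w) := Algebra.subset_adjoin ⟨2, rfl⟩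
    have hwb : b k ∈ Algebra.adjoin K (Set.range w) := Algebra.subset_adjoin ⟨3, rfl⟩
    refine PdLE.mono (n := 4) (by omega) (pd_of_adjoin w ?_ g ?_)
    · intro i
      fin_cases i
      · exact hx
      · exact hy
      · exact ha k
      · exact hb k
    · intro j
      obtain ⟨c, h1, h2⟩ := h j
      have hlin : ∀ p q : MvPolynomial (Fin N) K, p.IsHomogeneous 1 → q.IsHomogeneous 1 →
          π p = C c * π q → q ∈ Algebra.adjoin K (Set.range w) →
          p ∈ Algebra.adjoin K (Set.range w) := by
        intro p q hp hq hpq hqm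
        obtain ⟨d, e, hde⟩ := hker (p - C c * q)
          (hp.sub ((isHomogeneous_C_mul' c _ hq))) (by
            rw [map_sub, map_mul, hpq, ← algebraMap_eq, ← algebraMap_eq, AlgHom.commutes, sub_self])
        rw [sub_eq_iff_eq_add.1 hde]
        exact add_mem (add_mem (mul_mem (hC _ _) hwx) (mul_mem (hC _ _) hwy))
          (mul_mem (hC _ _) hqm)
      rw [hab j]
      exact add_mem (mul_mem (hlin _ _ (ha j) (ha k) h1 hwa) hwx)
        (mul_mem (hlin _ _ (hb j) (hb k) h2 hwb) hwy)
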